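/- Let s>7/2 be an integer and α a multi-index with |α|≤s. Suppose ρ⁰∈H^{s+1}(𝕋³) with ‖ρ⁰‖_{H^{s+1}}≤K and ρ⁰≥ρ̂>0; let N∈H^s(𝕋³) with N+ρ⁰≥ρ̂/2 on 𝕋³, and let Θ∈H^{s+1}(𝕋³). Then for every η>0 there is a constant C_η=C(η,s,K,ρ̂) such that |⟨∂^α_x((1/(N+ρ⁰))ΔΘ) − (1/(N+ρ⁰))∂^α_xΔΘ, ∂^α_xΘ⟩_{L²(𝕋³)}| ≤ η‖∇Θ‖²_{H^s} + C_η(‖(N,Θ)‖^s_{H^s}+1)(‖∂^α_xΘ‖²_{L²}+‖∂^α_xN‖²_{L²}). -/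

import Mathlib

open MeasureTheory Real
open scoped ENNReal

noncomputable section

/-! ### Basic setup: periodic fields on the torus `𝕋³ = (ℝ/2πℤ)³`

Functions on the torus are modelled as `2π`-periodic functions on `ℝ³`,
with all integrals (`L²` and `H^s` norms, inner products) taken over the
fundamental cube `Q3 = [0,2π]³`. -/

/-- A point of space `ℝ³`. -/
abbrev Pt : Type := Fin 3 → ℝ

/-- Scalar fields. -/
abbrev SF : Type := Pt → ℝ

/-- Vector fields, componentwise. -/
abbrev VF : Type := Fin 3 → SF

/-- The fundamental cube `[0,2π]³` of the torus. -/
def Q3 : Set Pt := Set.univ.pi fun _ => Set.Icc 0 (2 * π)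

/-- `2π`-periodicity in each coordinate: such a function descends to `𝕋³`. -/
def PerS (f : SF) : Prop := ∀ (x : Pt) (i : Fin 3), f (x + Pi.single i (2 * π)) = f x

/-- Componentwise periodicity of a vector field. -/
def PerV (v : VF) : Prop := ∀ i, PerS (v i)

/-- SmoothS scalar field (proxy for membership in the Sobolev spaces `H^k(𝕋³)`,
together with periodicity). -/
abbrev SmoothS (f : SF) : Prop := ContDiff ℝ (⊤ : ℕ∞) f

/-- SmoothS vector field. -/
abbrev SmoothV (v : VF) : Prop := ∀ i, ContDiff ℝ (⊤ : ℕ∞) (v i)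

/-- Partial derivative `∂_i`. -/
def pd (i : Fin 3) (f : SF) : SF := fun x => fderiv ℝ f x (Pi.single i 1)

/-- Iterated partial derivative in a fixed direction. -/
def pdIter (i : Fin 3) : ℕ → SF → SF
  | 0, f => f
  | n + 1, f => pd i (pdIter i n f)

/-- The spatial derivative `∂^α_x` for a multi-index `α`. -/
def mderiv (α : Fin 3 → ℕ) (f : SF) : SF :=
  pdIter 0 (α 0) (pdIter 1 (α 1) (pdIter 2 (α 2) f))

/-- `∂^α_x` of a vector field, componentwise. -/
def mderivV (α : Fin 3 → ℕ) (v : VF) : VF := fun i => mderiv α (v i)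

/-- `L²(𝕋³)` norm of a scalar field. -/
def L2 (f : SF) : ℝ := (∫ x in Q3, (f x) ^ 2) ^ (1/2 : ℝ)

/-- `L²(𝕋³)` norm of a vector field. -/
def L2V (v : VF) : ℝ := (∫ x in Q3, ∑ i, (v i x) ^ 2) ^ (1/2 : ℝ)

/-- `L²(𝕋³)` inner product of scalar fields. -/
def ip (f g : SF) : ℝ := ∫ x in Q3, f x * g x

/-- `L²(𝕋³)` inner product of vector fields. -/
def ipV (v w : VF) : ℝ := ∫ x in Q3, ∑ i, v i x * w i x

/-- The finite set of multi-indices `α` with `|α| ≤ s`. -/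
def midx (s : ℕ) : Finset (Fin 3 → ℕ) :=
  (Fintype.piFinset fun _ => Finset.range (s + 1)).filter fun α => (∑ i, α i) ≤ s

/-- `H^s(𝕋³)` norm of a scalar field. -/
def HsNorm (s : ℕ) (f : SF) : ℝ := (∑ α ∈ midx s, (L2 (mderiv α f)) ^ 2) ^ (1/2 : ℝ)

/-- `H^s(𝕋³)` norm of a vector field. -/
def HsNormV (s : ℕ) (v : VF) : ℝ := (∑ i, (HsNorm s (v i)) ^ 2) ^ (1/2 : ℝ)

/-! ### Differential operators -/

/-- Gradient of a scalar field. -/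
def grad (f : SF) : VF := fun i => pd i f

/-- Divergence of a vector field. -/
def divv (v : VF) : SF := fun x => ∑ i, pd i (v i) x

/-- Laplacian of a scalar field. -/
def lap (f : SF) : SF := fun x => ∑ i, pd i (pd i f) x

/-- Curl of a vector field. -/
def curl (v : VF) : VF :=
  ![fun x => pd 1 (v 2) x - pd 2 (v 1) x,
    fun x => pd 2 (v 0) x - pd 0 (v 2) x,
    fun x => pd 0 (v 1) x - pd 1 (v 0) x]

/-- Cross product of vector fields. -/
def cross (a b : VF) : VF :=
  ![fun x => a 1 x * b 2 x - a 2 x * b 1 x,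
    fun x => a 2 x * b 0 x - a 0 x * b 2 x,
    fun x => a 0 x * b 1 x - a 1 x * b 0 x]

/-- Pointwise dot product of vector fields. -/
def vdot (a b : VF) : SF := fun x => ∑ i, a i x * b i x

/-- Pointwise squared Euclidean norm `|a|²` of a vector field. -/
def normSq (a : VF) : SF := fun x => ∑ i, (a i x) ^ 2

/-- Convective derivative `(u·∇)f`. -/
def conv (u : VF) (f : SF) : SF := fun x => ∑ i, u i x * pd i f x

/-- Convective derivative `(u·∇)v` of a vector field, componentwise. -/
def convV (u v : VF) : VF := fun j => conv u (v j)

/-- Symmetric gradient `D(u) = (∇u + ∇uᵀ)/2`, entrywise. -/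
def Dsym (u : VF) (i j : Fin 3) : SF := fun x => (pd j (u i) x + pd i (u j) x) / 2

/-- Squared Frobenius norm `|D(u)|²`. -/
def DabsSq (u : VF) : SF := fun x => ∑ i, ∑ j, (Dsym u i j x) ^ 2

/-- Squared Frobenius norm `|∇v|²` of the Jacobian of a vector field. -/
def gradSq (v : VF) : SF := fun x => ∑ i, ∑ j, (pd j (v i) x) ^ 2

/-- Squared Euclidean norm `|∇f|²` of the gradient of a scalar field. -/
def gradSqS (f : SF) : SF := fun x => ∑ i, (pd i f x) ^ 2

/-- Viscous stress tensor `Ψ(u) = 2μ D(u) + λ (div u) I₃`, entrywise. -/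
def Psi (μ lam : ℝ) (u : VF) (i j : Fin 3) : SF :=
  fun x => 2 * μ * Dsym u i j x + lam * divv u x * (if i = j then 1 else 0)

/-- `div Ψ(u)`, componentwise. -/
def divPsi (μ lam : ℝ) (u : VF) : VF := fun i => fun x => ∑ j, pd j (Psi μ lam u i j) x

/-- The viscous dissipation `Ψ(u):∇u = 2μ|D(u)|² + λ(div u)²`. -/
def PsiColon (μ lam : ℝ) (u : VF) : SF :=
  fun x => ∑ i, ∑ j, Psi μ lam u i j x * pd j (u i) x

/-- Pointwise time derivative of a time-dependent scalar field. -/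
def dt (f : ℝ → SF) : ℝ → SF := fun t x => deriv (fun τ => f τ x) t

/-- Pointwise time derivative of a time-dependent vector field. -/
def dtV (v : ℝ → VF) : ℝ → VF := fun t i x => deriv (fun τ => v τ i x) t

/-- The time interval `[0, T)` for `T ∈ (0, +∞]`. -/
def Dom (T : ℝ≥0∞) : Set ℝ := {t : ℝ | 0 ≤ t ∧ ENNReal.ofReal t < T}

/-- Continuity in time with values in `H^k(𝕋³)` on a time set `D`
(the class `C⁰(D, H^k)`). -/
def ContHs (k : ℕ) (D : Set ℝ) (f : ℝ → SF) : Prop :=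
  ∀ t₀ ∈ D, ∀ ε > (0:ℝ), ∃ δ > (0:ℝ), ∀ t ∈ D, |t - t₀| < δ →
    HsNorm k (fun x => f t x - f t₀ x) < ε

/-- `C⁰(D, H^k)` for vector fields. -/
def ContHsV (k : ℕ) (D : Set ℝ) (v : ℝ → VF) : Prop := ∀ i, ContHs k D fun t => v t i

/-! ### The full compressible MHD system and the electromagnetic fluid system -/

/-- Classical solution of the full compressible MHD system
`∂_tρ + div(ρu) = 0`,
`ρ(∂_tu + u·∇u) + ∇(ρθ) = div Ψ(u) + curl H × H`,
`ρ(∂_tθ + u·∇θ) + ρθ div u = κΔθ + Ψ(u):∇u + |curl H|²`,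
`∂_tH − curl(u×H) = −curl(curl H)`, `div H = 0`
on the torus, on the time set `D` (all physical constants `𝔯 = c_V = σ = μ₀ = 1`). -/
structure IsMHDSol (μ lam κ : ℝ) (D : Set ℝ) (ρ θ : ℝ → SF) (u H : ℝ → VF) : Prop where
  perρ : ∀ t ∈ D, PerS (ρ t)
  perθ : ∀ t ∈ D, PerS (θ t)
  peru : ∀ t ∈ D, PerV (u t)
  perH : ∀ t ∈ D, PerV (H t)
  smρ : ∀ t ∈ D, SmoothS (ρ t)
  smθ : ∀ t ∈ D, SmoothS (θ t)
  smu : ∀ t ∈ D, SmoothV (u t)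
  smH : ∀ t ∈ D, SmoothV (H t)
  tdρ : ∀ (x : Pt), ∀ t ∈ D, DifferentiableAt ℝ (fun τ => ρ τ x) t
  tdθ : ∀ (x : Pt), ∀ t ∈ D, DifferentiableAt ℝ (fun τ => θ τ x) t
  tdu : ∀ (i : Fin 3) (x : Pt), ∀ t ∈ D, DifferentiableAt ℝ (fun τ => u τ i x) t
  tdH : ∀ (i : Fin 3) (x : Pt), ∀ t ∈ D, DifferentiableAt ℝ (fun τ => H τ i x) t
  mass : ∀ t ∈ D, ∀ x, dt ρ t x + divv (fun i y => ρ t y * u t i y) x = 0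
  mom : ∀ t ∈ D, ∀ x, ∀ i,
    ρ t x * (dtV u t i x + convV (u t) (u t) i x) + pd i (fun y => ρ t y * θ t y) x
      = divPsi μ lam (u t) i x + cross (curl (H t)) (H t) i x
  temp : ∀ t ∈ D, ∀ x,
    ρ t x * (dt θ t x + conv (u t) (θ t) x) + ρ t x * θ t x * divv (u t) x
      = κ * lap (θ t) x + PsiColon μ lam (u t) x + normSq (curl (H t)) x
  induction : ∀ t ∈ D, ∀ x, ∀ i,
    dtV H t i x - curl (cross (u t) (H t)) i x = - curl (curl (H t)) i x
  divH : ∀ t ∈ D, ∀ x, divv (H t) x = 0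

/-- Classical solution of the electromagnetic fluid system with dielectric
constant `ε > 0`:
`∂_tρ + div(ρu) = 0`,
`ρ(∂_tu + u·∇u) + ∇(ρθ) = div Ψ(u) + (E + u×H) × H`,
`ρ(∂_tθ + u·∇θ) + ρθ div u = κΔθ + Ψ(u):∇u + |E + u×H|²`,
`ε∂_tE − curl H + E + u×H = 0`,
`∂_tH + curl E = 0`, `div H = 0`
on the torus, on the time set `D`. -/
structure IsEMSol (μ lam κ eps : ℝ) (D : Set ℝ) (ρ θ : ℝ → SF) (u E H : ℝ → VF) : Prop where
  perρ : ∀ t ∈ D, PerS (ρ t)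
  perθ : ∀ t ∈ D, PerS (θ t)
  peru : ∀ t ∈ D, PerV (u t)
  perE : ∀ t ∈ D, PerV (E t)
  perH : ∀ t ∈ D, PerV (H t)
  smρ : ∀ t ∈ D, SmoothS (ρ t)
  smθ : ∀ t ∈ D, SmoothS (θ t)
  smu : ∀ t ∈ D, SmoothV (u t)
  smE : ∀ t ∈ D, SmoothV (E t)
  smH : ∀ t ∈ D, SmoothV (H t)
  tdρ : ∀ (x : Pt), ∀ t ∈ D, DifferentiableAt ℝ (fun τ => ρ τ x) t
  tdθ : ∀ (x : Pt), ∀ t ∈ D, DifferentiableAt ℝ (fun τ => θ τ x) t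
  tdu : ∀ (i : Fin 3) (x : Pt), ∀ t ∈ D, DifferentiableAt ℝ (fun τ => u τ i x) t
  tdE : ∀ (i : Fin 3) (x : Pt), ∀ t ∈ D, DifferentiableAt ℝ (fun τ => E τ i x) t
  tdH : ∀ (i : Fin 3) (x : Pt), ∀ t ∈ D, DifferentiableAt ℝ (fun τ => H τ i x) t
  mass : ∀ t ∈ D, ∀ x, dt ρ t x + divv (fun i y => ρ t y * u t i y) x = 0
  mom : ∀ t ∈ D, ∀ x, ∀ i,
    ρ t x * (dtV u t i x + convV (u t) (u t) i x) + pd i (fun y => ρ t y * θ t y) x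
      = divPsi μ lam (u t) i x
        + cross (fun j y => E t j y + cross (u t) (H t) j y) (H t) i x
  temp : ∀ t ∈ D, ∀ x,
    ρ t x * (dt θ t x + conv (u t) (θ t) x) + ρ t x * θ t x * divv (u t) x
      = κ * lap (θ t) x + PsiColon μ lam (u t) x
        + normSq (fun j y => E t j y + cross (u t) (H t) j y) x
  faraday : ∀ t ∈ D, ∀ x, ∀ i,
    eps * dtV E t i x - curl (H t) i x + E t i x + cross (u t) (H t) i x = 0
  ampere : ∀ t ∈ D, ∀ x, ∀ i, dtV H t i x + curl (E t) i x = 0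
  divH : ∀ t ∈ D, ∀ x, divv (H t) x = 0

/-- The electric field `E⁰ = curl H⁰ − u⁰ × H⁰` induced by the limiting MHD flow. -/
def Efield (u H : VF) : VF := fun i x => curl H i x - cross u H i x

/-- `(N,U,Θ,F,G)` solves the error system obtained by subtracting the full
compressible MHD equations (background solution `(ρ⁰,u⁰,θ⁰,H⁰)`, with induced
electric field `E⁰ = curl H⁰ − u⁰×H⁰`) from the `ε`-dielectric electromagnetic
fluid system: equivalently, `(ρ⁰+N, u⁰+U, θ⁰+Θ, E⁰+F, H⁰+G)` solves the
electromagnetic fluid system. -/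
def IsErrSol (μ lam κ eps : ℝ) (D : Set ℝ) (ρ0 θ0 : ℝ → SF) (u0 H0 : ℝ → VF)
    (N Θ : ℝ → SF) (U F G : ℝ → VF) : Prop :=
  IsEMSol μ lam κ eps D
    (fun t x => ρ0 t x + N t x) (fun t x => θ0 t x + Θ t x)
    (fun t i x => u0 t i x + U t i x)
    (fun t i x => Efield (u0 t) (H0 t) i x + F t i x)
    (fun t i x => H0 t i x + G t i x)

/-- The error-system energy `‖ℰ‖_s = ‖(N,U,Θ,G)‖_s` (sum of the `H^s` norms). -/
def Enorm (s : ℕ) (N Θ : SF) (U G : VF) : ℝ :=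
  HsNorm s N + HsNormV s U + HsNorm s Θ + HsNormV s G

/-- The squared `ε`-weighted energy `⫴ℰ⫴²_s = ‖ℰ‖²_s + ε‖F‖²_s`. -/
def EnormSq (s : ℕ) (eps : ℝ) (N Θ : SF) (U F G : VF) : ℝ :=
  (Enorm s N Θ U G) ^ 2 + eps * (HsNormV s F) ^ 2

end


/-! ### Calculus infrastructure -/

lemma cd_pd {f : SF} (hf : SmoothS f) (i : Fin 3) : SmoothS (pd i f) := by
  unfold pd
  have h : ContDiff ℝ (⊤ : ℕ∞) (fderiv ℝ f) := hf.fderiv_right (by norm_cast)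
  exact h.clm_apply contDiff_const

lemma cd_diff {f : SF} (hf : SmoothS f) : Differentiable ℝ f :=
  hf.differentiable (by simp)

lemma cd_pdIter {f : SF} (hf : SmoothS f) (i : Fin 3) (n : ℕ) : SmoothS (pdIter i n f) := by
  induction n with
  | zero => exact hf
  | succ n ih => exact cd_pd ih i

lemma cd_mderiv {f : SF} (hf : SmoothS f) (α : Fin 3 → ℕ) : SmoothS (mderiv α f) :=
  cd_pdIter (cd_pdIter (cd_pdIter hf _ _) _ _) _ _

lemma per_pd {f : SF} (hf : PerS f) (i : Fin 3) : PerS (pd i f) := by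
  intro x j
  unfold pd
  have h : (fun y => f (y + Pi.single j (2 * π))) = f := funext fun y => hf y j
  rw [← fderiv_comp_add_right, h]

lemma per_pdIter {f : SF} (hf : PerS f) (i : Fin 3) (n : ℕ) : PerS (pdIter i n f) := by
  induction n with
  | zero => exact hf
  | succ n ih => exact per_pd ih i

lemma per_mderiv {f : SF} (hf : PerS f) (α : Fin 3 → ℕ) : PerS (mderiv α f) :=
  per_pdIter (per_pdIter (per_pdIter hf _ _) _ _) _ _

lemma pd_comm {f : SF} (hf : SmoothS f) (i j : Fin 3) : pd i (pd j f) = pd j (pd i f) := by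
  have key : ∀ (v w : Pt) (x : Pt),
      fderiv ℝ (fun y => fderiv ℝ f y v) x w = fderiv ℝ (fderiv ℝ f) x w v := by
    intro v w x
    have h : ContDiff ℝ (⊤ : ℕ∞) (fderiv ℝ f) := hf.fderiv_right (by norm_cast)
    have hd : DifferentiableAt ℝ (fderiv ℝ f) x := (h.differentiable (by simp)) x
    rw [fderiv_clm_apply hd (differentiableAt_const _)]
    simp
  funext x
  have hsym : IsSymmSndFDerivAt ℝ f x := by
    apply (hf.contDiffAt (x := x)).isSymmSndFDerivAt
    rw [minSmoothness_of_isRCLikeNormedField]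
    exact WithTop.coe_le_coe.2 le_top
  show fderiv ℝ (fun y => fderiv ℝ f y _) x _ = fderiv ℝ (fun y => fderiv ℝ f y _) x _
  rw [key, key]
  exact hsym _ _

lemma pd_pdIter_comm {f : SF} (hf : SmoothS f) (i j : Fin 3) (n : ℕ) :
    pd i (pdIter j n f) = pdIter j n (pd i f) := by
  induction n with
  | zero => rfl
  | succ n ih =>
    show pd i (pd j (pdIter j n f)) = pd j (pdIter j n (pd i f))
    rw [pd_comm (cd_pdIter hf j n), ih]

lemma pd_mderiv_comm {f : SF} (hf : SmoothS f) (i : Fin 3) (α : Fin 3 → ℕ) :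
    pd i (mderiv α f) = mderiv α (pd i f) := by
  unfold mderiv
  rw [pd_pdIter_comm (cd_pdIter (cd_pdIter hf _ _) _ _),
    pd_pdIter_comm (cd_pdIter hf _ _), pd_pdIter_comm hf]

/-- unit multi-index -/
def eI (i : Fin 3) : Fin 3 → ℕ := Pi.single i 1

lemma mderiv_add_single {f : SF} (hf : SmoothS f) (i : Fin 3) (α : Fin 3 → ℕ) :
    mderiv (α + eI i) f = pd i (mderiv α f) := by
  fin_cases i
  · simp [mderiv, eI, pdIter]
  · simp only [mderiv, eI, Pi.add_apply]
    rw [pd_pdIter_comm (cd_pdIter (cd_pdIter hf _ _) _ _)]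
    simp [pdIter]
  · simp only [mderiv, eI, Pi.add_apply]
    rw [pd_pdIter_comm (cd_pdIter (cd_pdIter hf _ _) _ _), pd_pdIter_comm (cd_pdIter hf _ _)]
    simp [pdIter]

lemma mderiv_zero (f : SF) : mderiv 0 f = f := rfl

/-- order of a multi-index -/
def ord (α : Fin 3 → ℕ) : ℕ := ∑ i, α i

lemma ord_add (α β : Fin 3 → ℕ) : ord (α + β) = ord α + ord β := by
  simp [ord, Finset.sum_add_distrib]

lemma ord_eI (i : Fin 3) : ord (eI i) = 1 := by
  simp [ord, eI]

lemma ord_zero : ord 0 = 0 := by simp [ord]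

lemma ord_pos {α : Fin 3 → ℕ} (h : α ≠ 0) : 0 < ord α := by
  by_contra h0
  apply h
  have : ∑ i, α i = 0 := by unfold ord at h0; omega
  rw [Finset.sum_eq_zero_iff] at this
  funext i; exact this i (Finset.mem_univ _)

lemma mi_induction {P : (Fin 3 → ℕ) → Prop} (h0 : P 0)
    (h1 : ∀ α i, P α → P (α + eI i)) (α : Fin 3 → ℕ) : P α := by
  induction hn : ord α generalizing α with
  | zero =>
    have : α = 0 := by by_contra h; have := ord_pos h; omega
    rw [this]; exact h0
  | succ n ih =>
    have : ∃ i, α i ≠ 0 := by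
      by_contra h; push Not at h
      have : α = 0 := funext h
      rw [this, ord_zero] at hn; omega
    obtain ⟨i, hi⟩ := this
    have e : (α - eI i) + eI i = α := by
      funext j
      by_cases hj : j = i
      · subst hj; simp [eI]; omega
      · simp [eI, hj]
    rw [← e]
    apply h1
    apply ih
    have := ord_add (α - eI i) (eI i)
    rw [e, ord_eI] at this; omega

lemma mderiv_add {f g : SF} (hf : SmoothS f) (hg : SmoothS g) (α : Fin 3 → ℕ) :
    mderiv α (fun x => f x + g x) = fun x => mderiv α f x + mderiv α g x := by
  induction α using mi_induction with
  | h0 => rfl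
  | h1 α i ih =>
    rw [mderiv_add_single (hf.add hg), ih, mderiv_add_single hf, mderiv_add_single hg]
    funext x
    simp only [pd]
    rw [fderiv_fun_add (cd_diff (cd_mderiv hf α) x) (cd_diff (cd_mderiv hg α) x)]
    rfl

lemma mderiv_const (c : ℝ) {α : Fin 3 → ℕ} (h : α ≠ 0) : mderiv α (fun _ => c) = fun _ => 0 := by
  have : ∀ α : Fin 3 → ℕ, (α = 0) ∨ mderiv α (fun _ => c) = fun _ => 0 := by
    intro α
    induction α using mi_induction with
    | h0 => left; rfl
    | h1 α i ih =>
      right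
      rw [mderiv_add_single contDiff_const]
      rcases ih with h | h
      · subst h; funext x; simp [pd, mderiv_zero]
      · rw [h]; funext x; simp [pd]
  exact (this α).resolve_left h

lemma pd_mul {f g : SF} (hf : SmoothS f) (hg : SmoothS g) (i : Fin 3) (x : Pt) :
    pd i (fun x => f x * g x) x = pd i f x * g x + f x * pd i g x := by
  simp only [pd]
  rw [fderiv_fun_mul (cd_diff hf x) (cd_diff hg x)]
  simp; ring

lemma pd_list_sum {ι : Type} (L : List ι) (T : ι → SF) (hT : ∀ p, SmoothS (T p)) (i : Fin 3) :
    SmoothS (fun x => (L.map fun p => T p x).sum) ∧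
    ∀ x, pd i (fun x => (L.map fun p => T p x).sum) x = (L.map fun p => pd i (T p) x).sum := by
  induction L with
  | nil => 
    constructor
    · simpa using contDiff_const
    · intro x; simp [pd]
  | cons p L ih =>
    constructor
    · simpa using (hT p).add ih.1
    · intro x
      simp only [List.map_cons, List.sum_cons]
      rw [← ih.2 x]
      simp only [pd]
      rw [fderiv_fun_add (cd_diff (hT p) x) (cd_diff ih.1 x)]
      rfl

/-- Leibniz rule in existential form. -/
lemma leibniz (α : Fin 3 → ℕ) :
    ∃ L : List ((Fin 3 → ℕ) × (Fin 3 → ℕ)), (∀ p ∈ L, p.1 + p.2 = α ∧ p.1 ≠ 0) ∧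
      ∀ f g : SF, SmoothS f → SmoothS g → ∀ x, mderiv α (fun y => f y * g y) x =
        f x * mderiv α g x + (L.map fun p => mderiv p.1 f x * mderiv p.2 g x).sum := by
  induction α using mi_induction with
  | h0 => exact ⟨[], by simp, by intros; simp [mderiv_zero]⟩
  | h1 α i ih =>
    obtain ⟨L, hL, h⟩ := ih
    refine ⟨(eI i, α) :: (L.map (fun p => (p.1 + eI i, p.2)) ++ L.map (fun p => (p.1, p.2 + eI i))),
      ?_, ?_⟩
    · have he : ∀ β : Fin 3 → ℕ, β + eI i ≠ 0 := by
        intro β hb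
        have := congrArg ord hb
        rw [ord_add, ord_eI, ord_zero] at this; omega
      intro p hp
      simp only [List.mem_cons, List.mem_append, List.mem_map] at hp
      rcases hp with rfl | ⟨q, hq, rfl⟩ | ⟨q, hq, rfl⟩
      · exact ⟨add_comm _ _, by simpa using he 0⟩
      · exact ⟨by rw [← (hL q hq).1]; simp only; abel, he _⟩
      · exact ⟨by rw [← (hL q hq).1]; simp only; abel, (hL q hq).2⟩
    · intro f g hf hg x
      rw [mderiv_add_single (hf.mul hg)]
      have e : mderiv α (fun y => f y * g y) = fun x => f x * mderiv α g x +
        (L.map fun p => mderiv p.1 f x * mderiv p.2 g x).sum := funext (h f g hf hg)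
      have hs := pd_list_sum L (fun p x => mderiv p.1 f x * mderiv p.2 g x)
        (fun p => (cd_mderiv hf _).mul (cd_mderiv hg _)) i
      rw [e]
      have e2 : pd i (fun x => f x * mderiv α g x +
          (L.map fun p => mderiv p.1 f x * mderiv p.2 g x).sum) x =
          pd i (fun x => f x * mderiv α g x) x +
          pd i (fun x => (L.map fun p => mderiv p.1 f x * mderiv p.2 g x).sum) x := by
        simp only [pd]
        rw [fderiv_fun_add (cd_diff (hf.mul (cd_mderiv hg α)) x) (cd_diff hs.1 x)]
        rfl
      rw [e2, hs.2 x, pd_mul hf (cd_mderiv hg α), ← mderiv_add_single hg]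
      simp only [List.map_cons, List.sum_cons, List.map_append, List.sum_append, List.map_map,
        Function.comp_def]
      have e3 : (L.map fun p => pd i (fun x => mderiv p.1 f x * mderiv p.2 g x) x) =
          L.map (fun p => mderiv (p.1 + eI i) f x * mderiv p.2 g x +
            mderiv p.1 f x * mderiv (p.2 + eI i) g x) := by
        apply List.map_congr_left
        intro p _
        rw [pd_mul (cd_mderiv hf _) (cd_mderiv hg _), ← mderiv_add_single hf,
          ← mderiv_add_single hg]
      rw [e3, List.sum_map_add]
      have e4 : mderiv (eI i) f = pd i f := by
        have := mderiv_add_single hf i 0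
        simpa [mderiv_zero] using this
      rw [e4]; ring


/-! ### `L²` infrastructure -/

lemma isCompact_Q3 : IsCompact Q3 := isCompact_univ_pi fun _ => isCompact_Icc

lemma meas_Q3 : MeasurableSet Q3 := isCompact_Q3.measurableSet

lemma convex_Q3 : Convex ℝ Q3 := convex_pi fun _ _ => convex_Icc _ _

lemma int_Q3 {f : SF} (hf : Continuous f) : IntegrableOn f Q3 :=
  hf.continuousOn.integrableOn_compact isCompact_Q3

/-- volume of the cube -/
noncomputable def VQ : ℝ := ∫ _x in Q3, (1 : ℝ)

lemma VQ_pos : 0 < VQ := by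
  have h : volume Q3 = ENNReal.ofReal (2 * π) ^ 3 := by
    unfold Q3
    rw [volume_pi_pi]
    simp
  have : VQ = (2 * π) ^ 3 := by
    unfold VQ
    rw [setIntegral_const, Measure.real, h, ENNReal.toReal_pow, ENNReal.toReal_ofReal (by positivity)]
    simp
  rw [this]; positivity

lemma L2_eq (f : SF) : L2 f = √(∫ x in Q3, (f x) ^ 2) := by
  unfold L2; rw [Real.sqrt_eq_rpow]

lemma L2_nonneg (f : SF) : 0 ≤ L2 f := by rw [L2_eq]; positivity

lemma L2_sq (f : SF) : L2 f ^ 2 = ∫ x in Q3, (f x) ^ 2 := by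
  rw [L2_eq, Real.sq_sqrt]
  exact integral_nonneg fun x => sq_nonneg _

lemma ip_le {f g : SF} (hf : Continuous f) (hg : Continuous g) : |ip f g| ≤ L2 f * L2 g := by
  have h : ∀ t : ℝ, 0 ≤ L2 g ^ 2 * (t * t) + (2 * ip f g) * t + L2 f ^ 2 := by
    intro t
    have : L2 g ^ 2 * (t * t) + (2 * ip f g) * t + L2 f ^ 2 = ∫ x in Q3, (f x + t * g x) ^ 2 := by
      rw [L2_sq, L2_sq, ip, ← integral_mul_const, ← integral_const_mul, ← integral_mul_const,
        ← integral_add, ← integral_add]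
      · congr 1; funext x; ring
      all_goals
        apply int_Q3
        continuity
    rw [this]
    exact integral_nonneg fun x => sq_nonneg _
  have := discrim_le_zero h
  unfold discrim at this
  apply abs_le_of_sq_le_sq
  · nlinarith
  · exact mul_nonneg (L2_nonneg _) (L2_nonneg _)

lemma L2_le_of_sq {f : SF} {c : ℝ} (hc : 0 ≤ c) (h : L2 f ^ 2 ≤ c ^ 2) : L2 f ≤ c :=
  le_of_sq_le_sq h hc

lemma L2_add {f g : SF} (hf : Continuous f) (hg : Continuous g) :
    L2 (fun x => f x + g x) ≤ L2 f + L2 g := by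
  have hi := (abs_le.1 (ip_le hf hg)).2
  apply abs_le_of_sq_le_sq' _ (add_nonneg (L2_nonneg _) (L2_nonneg _)) |>.2
  have : L2 (fun x => f x + g x) ^ 2 = L2 f ^ 2 + 2 * ip f g + L2 g ^ 2 := by
    rw [L2_sq, L2_sq, L2_sq, ip, ← integral_const_mul, ← integral_add, ← integral_add]
    · congr 1; funext x; ring
    all_goals
      apply int_Q3
      continuity
  rw [this]; nlinarith

lemma L2_mono {f g : SF} (hf : Continuous f) (hg : Continuous g) {c : ℝ} (hc : 0 ≤ c)
    (h : ∀ x ∈ Q3, |f x| ≤ c * |g x|) : L2 f ≤ c * L2 g := by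
  apply abs_le_of_sq_le_sq' _ (mul_nonneg hc (L2_nonneg _)) |>.2
  rw [mul_pow, L2_sq, L2_sq, ← integral_const_mul]
  apply setIntegral_mono_on (int_Q3 (by continuity)) (int_Q3 (by continuity)) meas_Q3
  intro x hx
  have := pow_le_pow_left₀ (abs_nonneg _) (h x hx) 2
  rw [mul_pow, sq_abs, sq_abs] at this
  exact this

lemma L2_zero : L2 (fun _ => 0) = 0 := by rw [L2_eq]; simp

lemma L2_one_sq : L2 (fun _ => 1) ^ 2 = VQ := by rw [L2_sq]; simp [VQ]

lemma L2_of_sup {f : SF} (hf : Continuous f) {c : ℝ} (hc : 0 ≤ c) (h : ∀ x ∈ Q3, |f x| ≤ c) :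
    L2 f ≤ c * L2 (fun _ => 1) :=
  L2_mono hf continuous_const hc (by simpa using h)

lemma L1_le {f : SF} (hf : Continuous f) : ∫ x in Q3, |f x| ≤ L2 (fun _ => 1) * L2 f := by
  have h := (abs_le.1 (ip_le (f := fun _ => 1) (g := fun x => |f x|) continuous_const (by continuity))).2
  have e : L2 (fun x => |f x|) = L2 f := by rw [L2_eq, L2_eq]; simp
  rw [e] at h
  simpa [ip] using h

/-! ### Sobolev embedding `H² ⊂ L^∞` on the cube -/

lemma dir_deriv {f : SF} (_hf : SmoothS f) (x z : Pt) :
    fderiv ℝ f x z = ∑ i, z i * pd i f x := by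
  have hz : z = ∑ i, z i • (Pi.single i (1 : ℝ) : Pt) := by
    funext j; simp [Finset.sum_apply, Pi.single_apply]
  conv_lhs => rw [hz]
  rw [map_sum]
  simp [pd]

lemma line_deriv {f : SF} (hf : SmoothS f) (x z : Pt) (t : ℝ) :
    HasDerivAt (fun t : ℝ => f (x + t • z)) (∑ i, z i * pd i f (x + t • z)) t := by
  rw [← dir_deriv hf]
  have h1 : HasDerivAt (fun t : ℝ => x + t • z) z t := by
    simpa using ((hasDerivAt_id t).smul_const z).const_add x
  exact (cd_diff hf (x + t • z)).hasFDerivAt.comp_hasDerivAt t h1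

lemma line_deriv2 {f : SF} (hf : SmoothS f) (x z : Pt) (t : ℝ) :
    HasDerivAt (fun t : ℝ => ∑ i, z i * pd i f (x + t • z))
      (∑ i, z i * ∑ j, z j * pd j (pd i f) (x + t • z)) t := by
  apply HasDerivAt.fun_sum
  intro i _
  exact (line_deriv (cd_pd hf i) x z t).const_mul (z i)

lemma cont_line {h : Pt → ℝ} (hh : Continuous h) (x z : Pt) :
    Continuous fun t : ℝ => h (x + t • z) := by fun_prop

lemma cont_line2 {h : Pt → ℝ} (hh : Continuous h) (x : Pt) :
    Continuous fun p : ℝ × Pt => p.1 * |h (x + p.1 • (p.2 - x))| := by fun_prop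

lemma cont_line3 {h : Pt → ℝ} (hh : Continuous h) (x : Pt) :
    Continuous fun p : Pt × ℝ => p.2 * |h (x + p.2 • (p.1 - x))| := by fun_prop

lemma cont_line4 {h : Pt → ℝ} (hh : Continuous h) (x z : Pt) (c : ℝ) :
    Continuous fun t : ℝ => c * (t * |h (x + t • z)|) := by fun_prop

lemma taylor_id {f : SF} (hf : SmoothS f) (x z : Pt) :
    f x = f (x + z) - ∑ i, z i * pd i f (x + z)
      + ∫ t in (0:ℝ)..1, t * ∑ i, z i * ∑ j, z j * pd j (pd i f) (x + t • z) := by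
  have hc : ∀ i j, Continuous (pd j (pd i f)) := fun i j => (cd_pd (cd_pd hf i) j).continuous
  have hc1 : ∀ i, Continuous (pd i f) := fun i => (cd_pd hf i).continuous
  rw [intervalIntegral.integral_mul_deriv_eq_deriv_mul (u := fun t => t) (u' := fun _ => 1)
    (v := fun t : ℝ => ∑ i, z i * pd i f (x + t • z))
    (fun t _ => hasDerivAt_id t) (fun t _ => line_deriv2 hf x z t)
    (Continuous.intervalIntegrable (by continuity) _ _)
    (Continuous.intervalIntegrable (continuous_finsetSum _ fun i _ => continuous_const.mul
      (continuous_finsetSum _ fun j _ => continuous_const.mul (cont_line (hc i j) _ _))) _ _)]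
  have : ∫ t in (0:ℝ)..1, (1:ℝ) * ∑ i, z i * pd i f (x + t • z) = f (x + (1:ℝ) • z) - f (x + (0:ℝ) • z) := by
    simp only [one_mul]
    exact intervalIntegral.integral_eq_sub_of_hasDerivAt (fun t _ => line_deriv hf x z t)
      (Continuous.intervalIntegrable (continuous_finsetSum _ fun i _ => continuous_const.mul
        (cont_line (hc1 i) _ _)) _ _)
  rw [this]
  simp only [one_smul, zero_smul, add_zero]
  ring

lemma taylor_bound {f : SF} (hf : SmoothS f) (x w : Pt) (hx : x ∈ Q3) (hw : w ∈ Q3) :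
    |f x| ≤ |f w| + ∑ i, (2 * π) * |pd i f w|
      + ∑ i, ∑ j, (2 * π) ^ 2 * ∫ t in (0:ℝ)..1, t * |pd j (pd i f) (x + t • (w - x))| := by
  have hc : ∀ i j, Continuous (pd j (pd i f)) := fun i j => (cd_pd (cd_pd hf i) j).continuous
  have hz : ∀ i, |(w - x) i| ≤ 2 * π := by
    intro i
    have h1 := hx i (Set.mem_univ _)
    have h2 := hw i (Set.mem_univ _)
    simp only [Set.mem_Icc] at h1 h2
    rw [Pi.sub_apply, abs_le]; constructor <;> linarith
  have ht := taylor_id hf x (w - x)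
  rw [add_sub_cancel] at ht
  rw [ht]
  refine (abs_add_le _ _).trans (add_le_add ((abs_sub _ _).trans (add_le_add le_rfl ?_)) ?_)
  · refine (Finset.abs_sum_le_sum_abs _ _).trans (Finset.sum_le_sum fun i _ => ?_)
    rw [abs_mul]; gcongr; exact hz i
  · have e : ∑ i, ∑ j, (2 * π) ^ 2 * ∫ t in (0:ℝ)..1, t * |pd j (pd i f) (x + t • (w - x))|
        = ∫ t in (0:ℝ)..1, ∑ i, ∑ j, (2 * π) ^ 2 * (t * |pd j (pd i f) (x + t • (w - x))|) := by
      rw [intervalIntegral.integral_finsetSum]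
      · congr 1; funext i
        rw [intervalIntegral.integral_finsetSum]
        · congr 1; funext j
          rw [intervalIntegral.integral_const_mul]
        · intro j _
          exact Continuous.intervalIntegrable (cont_line4 (hc i j) _ _ _) _ _
      · intro i _
        exact Continuous.intervalIntegrable
          (continuous_finsetSum _ fun j _ => cont_line4 (hc i j) _ _ _) _ _
    rw [e, ← Real.norm_eq_abs]
    apply intervalIntegral.norm_integral_le_of_norm_le zero_le_one
    · refine Filter.Eventually.of_forall fun t ht => ?_
      rw [Real.norm_eq_abs, abs_mul, abs_of_pos ht.1]
      calc t * |∑ i, (w - x) i * ∑ j, (w - x) j * pd j (pd i f) (x + t • (w - x))|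
          ≤ t * ∑ i, ∑ j, (2 * π) ^ 2 * |pd j (pd i f) (x + t • (w - x))| := by
            apply mul_le_mul_of_nonneg_left _ ht.1.le
            refine (Finset.abs_sum_le_sum_abs _ _).trans (Finset.sum_le_sum fun i _ => ?_)
            rw [Finset.mul_sum]
            refine (Finset.abs_sum_le_sum_abs _ _).trans (Finset.sum_le_sum fun j _ => ?_)
            rw [abs_mul, abs_mul, ← mul_assoc, sq]
            gcongr
            · exact hz i
            · exact hz j
        _ = _ := by
            rw [Finset.mul_sum]
            refine Finset.sum_congr rfl fun i _ => ?_
            rw [Finset.mul_sum]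
            refine Finset.sum_congr rfl fun j _ => ?_
            ring
    · exact Continuous.intervalIntegrable
        (continuous_finsetSum _ fun i _ => continuous_finsetSum _ fun j _ => cont_line4 (hc i j) _ _ _) _ _

lemma hom_L2 {h : SF} (hh : Continuous h) {x : Pt} (hx : x ∈ Q3) {t : ℝ} (ht0 : 0 < t) (ht1 : t ≤ 1) :
    L2 (fun w => h (x + t • (w - x))) ^ 2 ≤ (t ^ 3)⁻¹ * L2 h ^ 2 := by
  rw [L2_sq, L2_sq]
  have hi : Integrable (Q3.indicator fun y => h y ^ 2) :=
    (integrable_indicator_iff meas_Q3).2 (int_Q3 (by continuity))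
  have e : ∀ w, x + t • (w - x) = (x - t • x) + t • w := by
    intro w; rw [smul_sub]; abel
  have key : ∫ w, (Q3.indicator fun y => h y ^ 2) ((x - t • x) + t • w)
      = (t ^ 3)⁻¹ * ∫ x in Q3, h x ^ 2 := by
    rw [Measure.integral_comp_smul volume
      (fun y => (Q3.indicator fun y => h y ^ 2) ((x - t • x) + y)) t,
      integral_add_left_eq_self, integral_indicator meas_Q3]
    simp [abs_of_pos ht0]
  rw [← key, ← integral_indicator meas_Q3]
  apply integral_mono
  · exact (integrable_indicator_iff meas_Q3).2 (int_Q3 (by continuity))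
  · have h1 : Integrable (fun y => (Q3.indicator fun y => h y ^ 2) ((x - t • x) + y)) :=
      hi.comp_add_left _
    exact h1.comp_smul ht0.ne'
  · intro w
    by_cases hw : w ∈ Q3
    · have hm : (x - t • x) + t • w ∈ Q3 := by
        have := convex_Q3 hx hw (a := 1 - t) (b := t) (by linarith) ht0.le (by ring)
        rwa [sub_smul, one_smul] at this
      simp only [Set.indicator_of_mem hw, Set.indicator_of_mem hm, e]
      exact le_rfl
    · simp only [Set.indicator_of_notMem hw]
      exact Set.indicator_nonneg (fun y _ => sq_nonneg _) _

lemma swap_bound {h : SF} (hh : Continuous h) {x : Pt} (hx : x ∈ Q3) :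
    ∫ w in Q3, ∫ t in (0:ℝ)..1, t * |h (x + t • (w - x))| ≤ 2 * L2 (fun _ => 1) * L2 h := by
  rw [← intervalIntegral_integral_swap (f := fun (t : ℝ) w => t * |h (x + t • (w - x))|)]
  · have hr : IntervalIntegrable (fun t : ℝ => L2 (fun _ => 1) * L2 h * t ^ (-(1/2) : ℝ)) volume 0 1 :=
      (intervalIntegral.intervalIntegrable_rpow' (by norm_num)).const_mul _
    have hb : ∫ t in (0:ℝ)..1, L2 (fun _ => 1) * L2 h * t ^ (-(1/2) : ℝ)
        = 2 * L2 (fun _ => 1) * L2 h := by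
      rw [intervalIntegral.integral_const_mul, integral_rpow (Or.inl (by norm_num))]
      norm_num; ring
    rw [← hb]
    refine (le_abs_self _).trans ?_
    rw [← Real.norm_eq_abs]
    apply intervalIntegral.norm_integral_le_of_norm_le zero_le_one _ hr
    refine Filter.Eventually.of_forall fun t ht => ?_
    rw [integral_const_mul, Real.norm_eq_abs, abs_mul, abs_of_pos ht.1,
      abs_of_nonneg (integral_nonneg fun _ => abs_nonneg _)]
    have h1 := L1_le (f := fun w => h (x + t • (w - x))) (by continuity)
    have h2 := hom_L2 hh hx ht.1 ht.2
    have h3 : L2 (fun w => h (x + t • (w - x))) ≤ (t * √t)⁻¹ * L2 h := by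
      have ht' := ht.1
      apply abs_le_of_sq_le_sq' _ (mul_nonneg (by positivity) (L2_nonneg _)) |>.2
      refine h2.trans (le_of_eq ?_)
      rw [mul_pow, inv_pow, mul_pow, Real.sq_sqrt ht.1.le]; ring
    have h4 : t ^ (-(1/2) : ℝ) = (√t)⁻¹ := by
      rw [Real.rpow_neg ht.1.le, Real.sqrt_eq_rpow]
    rw [h4]
    have ht' := ht.1
    have hst : 0 < √t := Real.sqrt_pos.2 ht'
    calc t * ∫ w in Q3, |h (x + t • (w - x))|
        ≤ t * (L2 (fun _ => 1) * ((t * √t)⁻¹ * L2 h)) := by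
          gcongr
          exact h1.trans (mul_le_mul_of_nonneg_left h3 (L2_nonneg _))
      _ = _ := by field_simp
  · have hc : Continuous (Function.uncurry fun (t : ℝ) (w : Pt) => t * |h (x + t • (w - x))|) := 
      cont_line2 hh x
    rw [Measure.prod_restrict]
    have : IntegrableOn (Function.uncurry fun (t : ℝ) (w : Pt) => t * |h (x + t • (w - x))|)
        (Set.Icc 0 1 ×ˢ Q3) (volume.prod volume) :=
      hc.continuousOn.integrableOn_compact (isCompact_Icc.prod isCompact_Q3)
    apply this.mono_set
    apply Set.prod_mono _ subset_rfl
    rw [Set.uIoc_of_le zero_le_one]; exact Set.Ioc_subset_Icc_self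

lemma sobolev : ∃ C > (0:ℝ), ∀ (f : SF) (B : ℝ), SmoothS f → 0 ≤ B →
    (∀ δ, ord δ ≤ 2 → L2 (mderiv δ f) ≤ B) → ∀ x ∈ Q3, |f x| ≤ C * B := by
  have hV := VQ_pos
  have hL : 0 < L2 (fun _ => 1) := by
    rcases (L2_nonneg (fun _ => 1)).lt_or_eq with h | h
    · exact h
    · have := L2_one_sq; rw [← h] at this; simp at this; linarith
  refine ⟨VQ⁻¹ * (L2 (fun _ => 1) * (1 + 3 * (2 * π) + 9 * (2 * π) ^ 2 * 2)), by positivity, ?_⟩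
  intro f B hf hB hL2 x hx
  have hc0 : Continuous f := hf.continuous
  have hc1 : ∀ i, Continuous (pd i f) := fun i => (cd_pd hf i).continuous
  have hc : ∀ i j, Continuous (pd j (pd i f)) := fun i j => (cd_pd (cd_pd hf i) j).continuous
  have e1 : ∀ i, mderiv (eI i) f = pd i f := by
    intro i
    have := mderiv_add_single hf i 0
    simpa [mderiv_zero] using this
  have b0 : L2 f ≤ B := hL2 0 (by simp [ord_zero])
  have b1 : ∀ i, L2 (pd i f) ≤ B := fun i => by
    rw [← e1]; exact hL2 _ (by simp [ord_eI])
  have b2 : ∀ i j, L2 (pd j (pd i f)) ≤ B := fun i j => by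
    rw [← e1 i, ← mderiv_add_single hf]; exact hL2 _ (by simp [ord_eI, ord_add])
  have hI : ∀ i j, Continuous fun w : Pt => ∫ t in (0:ℝ)..1, t * |pd j (pd i f) (x + t • (w - x))| := by
    intro i j
    exact intervalIntegral.continuous_parametric_intervalIntegral_of_continuous'
      (cont_line3 (hc i j) x) _ _
  have hmain : ∫ _w in Q3, |f x| ≤ ∫ w in Q3, (|f w| + ∑ i, (2 * π) * |pd i f w|
      + ∑ i, ∑ j, (2 * π) ^ 2 * ∫ t in (0:ℝ)..1, t * |pd j (pd i f) (x + t • (w - x))|) := by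
    apply setIntegral_mono_on (int_Q3 (by continuity)) (int_Q3 (by continuity)) meas_Q3
    intro w hw
    exact taylor_bound hf x w hx hw
  have hl : ∫ _w in Q3, |f x| = VQ * |f x| := by
    unfold VQ; rw [← integral_mul_const]; simp
  rw [hl, integral_add (int_Q3 (by continuity)) (int_Q3 (by continuity)),
    integral_add (int_Q3 (by continuity)) (int_Q3 (by continuity)),
    integral_finsetSum _ (fun i _ => int_Q3 (by continuity)),
    integral_finsetSum _ (fun i _ => int_Q3 (by continuity))] at hmain
  have hS1 : ∑ i, ∫ w in Q3, (2 * π) * |pd i f w| ≤ ∑ _i : Fin 3, (2 * π) * (L2 (fun _ => 1) * B) := by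
    apply Finset.sum_le_sum
    intro i _
    rw [integral_const_mul]
    gcongr
    exact (L1_le (hc1 i)).trans (mul_le_mul_of_nonneg_left (b1 i) hL.le)
  have hS2 : ∑ i, ∫ w in Q3, ∑ j, (2 * π) ^ 2 * ∫ t in (0:ℝ)..1, t * |pd j (pd i f) (x + t • (w - x))|
      ≤ ∑ _i : Fin 3, ∑ _j : Fin 3, (2 * π) ^ 2 * (2 * L2 (fun _ => 1) * B) := by
    apply Finset.sum_le_sum
    intro i _
    rw [integral_finsetSum _ (fun j _ => int_Q3 (by have := hI i j; continuity))]
    apply Finset.sum_le_sum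
    intro j _
    rw [integral_const_mul]
    gcongr
    exact (swap_bound (hc i j) hx).trans (mul_le_mul_of_nonneg_left (b2 i j) (by positivity))
  have hS0 : ∫ w in Q3, |f w| ≤ L2 (fun _ => 1) * B :=
    (L1_le hc0).trans (mul_le_mul_of_nonneg_left b0 hL.le)
  simp only [Finset.sum_const, Finset.card_univ, Fintype.card_fin, nsmul_eq_mul] at hS1 hS2
  have hfin : VQ * |f x| ≤ L2 (fun _ => 1) * (1 + 3 * (2 * π) + 9 * (2 * π) ^ 2 * 2) * B := by
    refine hmain.trans ((add_le_add (add_le_add hS0 hS1) hS2).trans (le_of_eq ?_))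
    push_cast; ring
  rw [mul_assoc, ← div_eq_inv_mul, le_div_iff₀ hV]
  linarith


/-! ### Reciprocal estimates -/

lemma per_coord {f : SF} (hf : PerS f) (x : Pt) (i : Fin 3) :
    ∃ t ∈ Set.Icc 0 (2 * π), f (Function.update x i t) = f x := by
  have hp : Function.Periodic (fun t => f (Function.update x i t)) (2 * π) := by
    intro t
    have e : Function.update x i (t + 2 * π) = Function.update x i t + Pi.single i (2 * π) := by
      funext j
      by_cases hj : j = i
      · subst hj; simp
      · simp [hj]
    show f _ = f _
    rw [e, hf]
  obtain ⟨y, hy, h⟩ := hp.exists_mem_Ico₀ (by positivity) (x i)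
  refine ⟨y, ⟨hy.1, hy.2.le⟩, ?_⟩
  simpa using h.symm

lemma per_reduce {f : SF} (hf : PerS f) (x : Pt) : ∃ y ∈ Q3, f y = f x := by
  obtain ⟨a, ha, h0⟩ := per_coord hf x 0
  obtain ⟨b, hb, h1⟩ := per_coord hf (Function.update x 0 a) 1
  obtain ⟨c, hc, h2⟩ := per_coord hf (Function.update (Function.update x 0 a) 1 b) 2
  refine ⟨_, ?_, h2.trans (h1.trans h0)⟩
  intro i _
  fin_cases i
  · simpa [Function.update] using ha
  · simpa [Function.update] using hb
  · simpa [Function.update] using hc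

lemma grad_sq {f : SF} (hf : SmoothS f) (h0 : ∀ x, 0 ≤ f x) (i : Fin 3) {B : ℝ}
    (hB : ∀ x, |pd i (pd i f) x| ≤ B) (x : Pt) : pd i f x ^ 2 ≤ 4 * B * f x := by
  have key : ∀ τ : ℝ, 0 ≤ B * (τ * τ) + pd i f x * τ + f x := by
    intro τ
    have ht := taylor_id hf (x + Pi.single i τ) (-Pi.single i τ)
    have e : ∀ v : Fin 3 → ℝ, ∑ j, (-Pi.single i τ : Pt) j * v j = -τ * v i := by
      intro v
      rw [Finset.sum_eq_single i]
      · simp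
      · intro j _ hj; simp [hj]
      · simp
    simp only [e, add_neg_cancel_right] at ht
    have hI : ‖∫ t in (0:ℝ)..1, t * (-τ * (-τ * pd i (pd i f) (x + Pi.single i τ + t • -Pi.single i τ)))‖
        ≤ (B * (τ * τ)) * |1 - 0| := by
      apply intervalIntegral.norm_integral_le_of_norm_le_const
      intro t ht
      rw [Set.uIoc_of_le zero_le_one] at ht
      have hb := hB (x + Pi.single i τ + t • -Pi.single i τ)
      rw [Real.norm_eq_abs, abs_mul, abs_mul, abs_mul, abs_neg, abs_of_pos ht.1, ← mul_assoc |τ|,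
        abs_mul_abs_self]
      have h2 : 0 ≤ τ * τ * |pd i (pd i f) (x + Pi.single i τ + t • -Pi.single i τ)| :=
        mul_nonneg (mul_self_nonneg _) (abs_nonneg _)
      have h3 := mul_le_mul_of_nonneg_left hb (mul_self_nonneg τ)
      nlinarith [ht.2, ht.1]
    have h1 := h0 (x + Pi.single i τ)
    have h2 := (abs_le.1 hI).2
    simp only [sub_zero, abs_one, mul_one] at h2
    linarith
  have := discrim_le_zero key
  unfold discrim at this
  linarith

lemma list_bound {ι D : Type} (L : List ι) (T : D → ι → ℝ) (X : D → ℝ)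
    (h : ∀ p ∈ L, ∃ C ≥ (0:ℝ), ∀ d, |T d p| ≤ C * X d) :
    ∃ C ≥ (0:ℝ), ∀ d, |(L.map (T d)).sum| ≤ C * X d := by
  induction L with
  | nil => exact ⟨0, le_rfl, by simp⟩
  | cons p L ih =>
    obtain ⟨C1, h1, hC1⟩ := h p (by simp)
    obtain ⟨C2, h2, hC2⟩ := ih fun q hq => h q (by simp [hq])
    refine ⟨C1 + C2, add_nonneg h1 h2, fun d => ?_⟩
    simp only [List.map_cons, List.sum_cons]
    refine (abs_add_le _ _).trans ?_
    rw [add_mul]; exact add_le_add (hC1 d) (hC2 d)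

lemma list_cont {ι : Type} (L : List ι) (T : ι → SF) (hT : ∀ p, Continuous (T p)) :
    Continuous fun x => (L.map fun p => T p x).sum := by
  induction L with
  | nil => simpa using continuous_const
  | cons p L ih =>
    simp only [List.map_cons, List.sum_cons]
    exact (hT p).add ih

lemma list_L2 {ι D : Type} (L : List ι) (T : D → ι → SF) (hT : ∀ d p, Continuous (T d p)) (X : D → ℝ)
    (h : ∀ p ∈ L, ∃ C ≥ (0:ℝ), ∀ d, L2 (T d p) ≤ C * X d) :
    ∃ C ≥ (0:ℝ), ∀ d, L2 (fun x => (L.map fun p => T d p x).sum) ≤ C * X d := by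
  induction L with
  | nil => exact ⟨0, le_rfl, by simp [L2_zero]⟩
  | cons p L ih =>
    obtain ⟨C1, h1, hC1⟩ := h p (by simp)
    obtain ⟨C2, h2, hC2⟩ := ih fun q hq => h q (by simp [hq])
    refine ⟨C1 + C2, add_nonneg h1 h2, fun d => ?_⟩
    simp only [List.map_cons, List.sum_cons]
    refine (L2_add (hT d p) (list_cont L (T d) (hT d))).trans ?_
    rw [add_mul]; exact add_le_add (hC1 d) (hC2 d)

/-- The data of the estimate, with its quantitative bounds. -/
structure Dat (s : ℕ) (r : ℝ) where
  u : SF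
  Θ : SF
  M : ℝ
  G : ℝ
  hu : SmoothS u
  pu : PerS u
  hΘ : SmoothS Θ
  hM : 1 ≤ M
  hG : 0 ≤ G
  lb : ∀ x, r ≤ u x
  bu : ∀ β, ord β ≤ s → L2 (mderiv β u) ≤ M
  bΘ : ∀ β i, ord β ≤ s → L2 (mderiv β (pd i Θ)) ≤ G

namespace Dat
variable {s : ℕ} {r : ℝ}

/-- reciprocal -/
noncomputable def a (d : Dat s r) : SF := fun x => 1 / d.u x

/-- square root of the bound -/
noncomputable def R (d : Dat s r) : ℝ := √d.M

lemma R_one (d : Dat s r) : 1 ≤ d.R := Real.one_le_sqrt.2 d.hM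

lemma R_sq (d : Dat s r) : d.R ^ 2 = d.M := Real.sq_sqrt (by linarith [d.hM])

lemma R_nonneg (d : Dat s r) : 0 ≤ d.R := zero_le_one.trans d.R_one

lemma upos (hr : 0 < r) (d : Dat s r) (x : Pt) : 0 < d.u x := hr.trans_le (d.lb x)

lemma ha (hr : 0 < r) (d : Dat s r) : SmoothS d.a :=
  contDiff_const.div d.hu fun x => (d.upos hr x).ne'

lemma a_pos (hr : 0 < r) (d : Dat s r) (x : Pt) : 0 < d.a x := one_div_pos.2 (d.upos hr x)

lemma a_le (hr : 0 < r) (d : Dat s r) (x : Pt) : d.a x ≤ 1 / r :=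
  one_div_le_one_div_of_le hr (d.lb x)

lemma au (hr : 0 < r) (d : Dat s r) (x : Pt) : d.a x * d.u x = 1 :=
  one_div_mul_cancel (d.upos hr x).ne'

end Dat

lemma mderiv_mderiv {f : SF} (hf : SmoothS f) (γ δ : Fin 3 → ℕ) :
    mderiv δ (mderiv γ f) = mderiv (γ + δ) f := by
  induction δ using mi_induction with
  | h0 => simp [mderiv_zero]
  | h1 δ i ih =>
    rw [mderiv_add_single (cd_mderiv hf γ), ih, ← mderiv_add_single hf, add_assoc]

lemma ratio (s : ℕ) (r : ℝ) (hs : 4 ≤ s) (hr : 0 < r) :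
    ∃ C ≥ (0:ℝ), ∀ (d : Dat s r) (γ : Fin 3 → ℕ), γ ≠ 0 → ord γ + 2 ≤ s → ∀ x,
      |d.a x * mderiv γ d.u x| ≤ C * d.R ^ ord γ := by
  obtain ⟨C0, hC0, hsob⟩ := sobolev
  have hsup : ∀ (d : Dat s r) (γ : Fin 3 → ℕ), ord γ + 2 ≤ s → ∀ x, |mderiv γ d.u x| ≤ C0 * d.M := by
    intro d γ hγ x
    obtain ⟨y, hy, e⟩ := per_reduce (per_mderiv d.pu γ) x
    rw [← e]
    apply hsob _ _ (cd_mderiv d.hu γ) (by linarith [d.hM]) _ y hy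
    intro δ hδ
    rw [mderiv_mderiv d.hu]
    apply d.bu
    rw [ord_add]; omega
  refine ⟨√(4 * C0 / r) + C0 / r, by positivity, ?_⟩
  intro d γ hγ hγs x
  have hap := d.a_pos hr x
  have hal := d.a_le hr x
  have hM0 : 0 ≤ d.M := by linarith [d.hM]
  rw [abs_mul, abs_of_pos hap]
  have h1 := ord_pos hγ
  rcases Nat.lt_or_ge (ord γ) 2 with h2 | h2
  · have h3 : ord γ = 1 := by omega
    obtain ⟨i, rfl⟩ : ∃ i, γ = eI i := by
      have : ∃ i, γ i ≠ 0 := by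
        by_contra h; push Not at h; exact hγ (funext h)
      obtain ⟨i, hi⟩ := this
      refine ⟨i, ?_⟩
      unfold ord at h3
      funext j
      rw [Fin.sum_univ_three] at h3
      fin_cases i <;> fin_cases j <;> simp [eI] at * <;> omega
    have e1 : mderiv (eI i) d.u = pd i d.u := by
      have := mderiv_add_single d.hu i 0
      simpa [mderiv_zero] using this
    have hb : ∀ x, |pd i (pd i d.u) x| ≤ C0 * d.M := by
      rw [← e1, ← mderiv_add_single d.hu]
      exact hsup d _ (by rw [ord_add, ord_eI]; omega)
    have hg := grad_sq d.hu (fun x => (d.upos hr x).le) i hb x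
    rw [e1, h3, pow_one]
    have h5 : d.a x * |pd i d.u x| ≤ √(4 * C0 / r) * d.R := by
      apply abs_le_of_sq_le_sq' _ (mul_nonneg (Real.sqrt_nonneg _) d.R_nonneg) |>.2
      rw [mul_pow, mul_pow, sq_abs, Real.sq_sqrt (by positivity), d.R_sq]
      calc d.a x ^ 2 * pd i d.u x ^ 2 ≤ d.a x ^ 2 * (4 * (C0 * d.M) * d.u x) := by gcongr
        _ = d.a x * (4 * C0 * d.M) * (d.a x * d.u x) := by ring
        _ = d.a x * (4 * C0 * d.M) := by rw [d.au hr]; ring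
        _ ≤ 1 / r * (4 * C0 * d.M) := by gcongr
        _ = _ := by ring
    refine h5.trans (mul_le_mul_of_nonneg_right ?_ d.R_nonneg)
    have : 0 ≤ C0 / r := by positivity
    linarith
  · have hR : d.M ≤ d.R ^ ord γ := by
      rw [← d.R_sq]; exact pow_le_pow_right₀ d.R_one h2
    calc d.a x * |mderiv γ d.u x| ≤ 1 / r * (C0 * d.M) := by
          gcongr
          exact hsup d γ hγs x
      _ = C0 / r * d.M := by ring
      _ ≤ (√(4 * C0 / r) + C0 / r) * d.R ^ ord γ := by
          gcongr
          linarith [Real.sqrt_nonneg (4 * C0 / r)]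

lemma recip_rec (s : ℕ) (r : ℝ) (hr : 0 < r) (β : Fin 3 → ℕ) (hβ : β ≠ 0) :
    ∃ L : List ((Fin 3 → ℕ) × (Fin 3 → ℕ)), (∀ p ∈ L, p.1 + p.2 = β ∧ p.1 ≠ 0) ∧
      ∀ (d : Dat s r) x, mderiv β d.a x =
        (L.map fun p => -(d.a x * mderiv p.1 d.u x * mderiv p.2 d.a x)).sum := by
  obtain ⟨L, hL, h⟩ := leibniz β
  refine ⟨L, hL, fun d x => ?_⟩
  have h1 := h d.u d.a d.hu (d.ha hr) x
  have e : (fun y => d.u y * d.a y) = fun _ => 1 := by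
    funext y; rw [mul_comm]; exact d.au hr y
  rw [e, mderiv_const _ hβ] at h1
  have e2 : (L.map fun p => -(d.a x * mderiv p.1 d.u x * mderiv p.2 d.a x)).sum =
      -d.a x * (L.map fun p => mderiv p.1 d.u x * mderiv p.2 d.a x).sum := by
    rw [← List.sum_map_mul_left]
    congr 1
    apply List.map_congr_left
    intro p _; ring
  rw [e2]
  have h2 := d.au hr x
  linear_combination (-mderiv β d.a x) * h2 + d.a x * (-h1)

lemma asup (s : ℕ) (r : ℝ) (hs : 4 ≤ s) (hr : 0 < r) (β : Fin 3 → ℕ) (hβ : ord β + 2 ≤ s) :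
    ∃ C ≥ (0:ℝ), ∀ (d : Dat s r) x, |mderiv β d.a x| ≤ C * d.R ^ ord β := by
  induction hn : ord β using Nat.strong_induction_on generalizing β with
  | _ n ih =>
    subst hn
    by_cases h0 : β = 0
    · subst h0
      refine ⟨1 / r, by positivity, fun d x => ?_⟩
      rw [mderiv_zero, ord_zero, pow_zero, mul_one, abs_of_pos (d.a_pos hr x)]
      exact d.a_le hr x
    · obtain ⟨L, hL, h⟩ := recip_rec s r hr β h0
      obtain ⟨C1, hC1, hrat⟩ := ratio s r hs hr
      have := list_bound (D := Dat s r × Pt) L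
        (fun d p => -(d.1.a d.2 * mderiv p.1 d.1.u d.2 * mderiv p.2 d.1.a d.2))
        (fun d => d.1.R ^ ord β) ?_
      · obtain ⟨C, hC, hb⟩ := this
        refine ⟨C, hC, fun d x => ?_⟩
        rw [h d x]
        exact hb (d, x)
      · intro p hp
        obtain ⟨hp1, hp2⟩ := hL p hp
        have ho : ord p.1 + ord p.2 = ord β := by rw [← ord_add, hp1]
        have := ord_pos hp2
        obtain ⟨C2, hC2, hb⟩ := ih (ord p.2) (by omega) p.2 (by omega) rfl
        refine ⟨C1 * C2, by positivity, fun d => ?_⟩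
        have hR := d.1.R_nonneg
        rw [abs_neg, abs_mul]
        calc _ ≤ (C1 * d.1.R ^ ord p.1) * (C2 * d.1.R ^ ord p.2) := by
              gcongr
              · exact hrat d.1 p.1 hp2 (by omega) d.2
              · exact hb d.1 d.2
          _ = C1 * C2 * d.1.R ^ ord β := by rw [← ho, pow_add]; ring

lemma aL2 (s : ℕ) (r : ℝ) (hs : 4 ≤ s) (hr : 0 < r) (β : Fin 3 → ℕ) (hβ : ord β ≤ s) :
    ∃ C ≥ (0:ℝ), ∀ (d : Dat s r), L2 (mderiv β d.a) ≤ C * d.R ^ ord β := by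
  induction hn : ord β using Nat.strong_induction_on generalizing β with
  | _ n ih =>
    subst hn
    by_cases h0 : ord β + 2 ≤ s
    · obtain ⟨C, hC, hb⟩ := asup s r hs hr β h0
      refine ⟨C * L2 (fun _ => 1), mul_nonneg hC (L2_nonneg _), fun d => ?_⟩
      have := L2_of_sup (cd_mderiv (d.ha hr) β).continuous
        (mul_nonneg hC (pow_nonneg d.R_nonneg _)) (fun x _ => hb d x)
      linarith
    · have hβ0 : β ≠ 0 := by
        rintro rfl; rw [ord_zero] at h0; omega
      obtain ⟨L, hL, h⟩ := recip_rec s r hr β hβ0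
      obtain ⟨C1, hC1, hrat⟩ := ratio s r hs hr
      have hcu : ∀ (d : Dat s r) γ, Continuous (mderiv γ d.u) := fun d γ => (cd_mderiv d.hu γ).continuous
      have hca : ∀ (d : Dat s r) γ, Continuous (mderiv γ d.a) :=
        fun d γ => (cd_mderiv (d.ha hr) γ).continuous
      have hca0 : ∀ (d : Dat s r), Continuous d.a := fun d => (d.ha hr).continuous
      have hT : ∀ (d : Dat s r) (p : (Fin 3 → ℕ) × (Fin 3 → ℕ)),
          Continuous fun x => -(d.a x * mderiv p.1 d.u x * mderiv p.2 d.a x) :=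
        fun d p => (((hca0 d).mul (hcu d p.1)).mul (hca d p.2)).neg
      have := list_L2 (D := Dat s r) L
        (fun d p x => -(d.a x * mderiv p.1 d.u x * mderiv p.2 d.a x)) hT
        (fun d => d.R ^ ord β) ?_
      · obtain ⟨C, hC, hb⟩ := this
        refine ⟨C, hC, fun d => ?_⟩
        rw [show mderiv β d.a = _ from funext (h d)]
        exact hb d
      · intro p hp
        obtain ⟨hp1, hp2⟩ := hL p hp
        have ho : ord p.1 + ord p.2 = ord β := by rw [← ord_add, hp1]
        have hpos := ord_pos hp2
        by_cases hc : ord p.1 + 2 ≤ s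
        · obtain ⟨C2, hC2, hb⟩ := ih (ord p.2) (by omega) p.2 (by omega) rfl
          refine ⟨C1 * C2, by positivity, fun d => ?_⟩
          have hR := d.R_nonneg
          refine (L2_mono (hT d p) (hca d p.2) (c := C1 * d.R ^ ord p.1) (by positivity) ?_).trans ?_
          · intro x _
            rw [abs_neg, abs_mul]
            gcongr
            exact hrat d p.1 hp2 hc x
          · calc _ ≤ (C1 * d.R ^ ord p.1) * (C2 * d.R ^ ord p.2) := by
                  gcongr
                  exact hb d
              _ = C1 * C2 * d.R ^ ord β := by rw [← ho, pow_add]; ring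
        · obtain ⟨C2, hC2, hb⟩ := asup s r hs hr p.2 (by omega)
          refine ⟨1 / r * C2, by positivity, fun d => ?_⟩
          have hR := d.R_nonneg
          refine (L2_mono (hT d p) (hcu d p.1) (c := 1 / r * (C2 * d.R ^ ord p.2))
            (by positivity) ?_).trans ?_
          · intro x _
            rw [abs_neg, abs_mul, abs_mul, abs_of_pos (d.a_pos hr x), mul_right_comm]
            have := d.a_le hr x
            gcongr
            exact hb d x
          · calc _ ≤ (1 / r * (C2 * d.R ^ ord p.2)) * d.R ^ ord p.1 := by
                  gcongr
                  refine (d.bu p.1 (by omega)).trans ?_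
                  rw [← d.R_sq]; exact pow_le_pow_right₀ d.R_one (by omega)
              _ = 1 / r * C2 * d.R ^ ord β := by rw [← ho, pow_add]; ring
 
lemma lap_eq {f : SF} (hf : SmoothS f) (γ : Fin 3 → ℕ) :
    mderiv γ (lap f) = fun x => mderiv (γ + eI 0) (pd 0 f) x + mderiv (γ + eI 1) (pd 1 f) x
      + mderiv (γ + eI 2) (pd 2 f) x := by
  have e : lap f = fun x => (pd 0 (pd 0 f) x + pd 1 (pd 1 f) x) + pd 2 (pd 2 f) x := by
    funext x; simp [lap, Fin.sum_univ_three]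
  have h : ∀ i, SmoothS (pd i (pd i f)) := fun i => cd_pd (cd_pd hf i) i
  have h2 : ∀ i, mderiv γ (pd i (pd i f)) = mderiv (γ + eI i) (pd i f) := by
    intro i
    rw [mderiv_add_single (cd_pd hf i), pd_mderiv_comm (cd_pd hf i)]
  rw [e, mderiv_add ((h 0).add (h 1)) (h 2), mderiv_add (h 0) (h 1), h2, h2, h2]

lemma cd_lap {f : SF} (hf : SmoothS f) : SmoothS (lap f) := by
  have e : lap f = fun x => (pd 0 (pd 0 f) x + pd 1 (pd 1 f) x) + pd 2 (pd 2 f) x := by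
    funext x; simp [lap, Fin.sum_univ_three]
  have h : ∀ i, SmoothS (pd i (pd i f)) := fun i => cd_pd (cd_pd hf i) i
  rw [e]; exact ((h 0).add (h 1)).add (h 2)

lemma comm_L2 (s : ℕ) (r : ℝ) (hs : 4 ≤ s) (hr : 0 < r) (α : Fin 3 → ℕ) (hα : ord α ≤ s) :
    ∃ C ≥ (0:ℝ), ∀ (d : Dat s r),
      Continuous (fun x => mderiv α (fun y => d.a y * lap d.Θ y) x - d.a x * mderiv α (lap d.Θ) x) ∧
      L2 (fun x => mderiv α (fun y => d.a y * lap d.Θ y) x - d.a x * mderiv α (lap d.Θ) x)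
        ≤ C * (d.R ^ s * d.G) := by
  obtain ⟨L, hL, h⟩ := leibniz α
  obtain ⟨C0, hC0, hsob⟩ := sobolev
  have hcl : ∀ (d : Dat s r) γ, Continuous (mderiv γ (lap d.Θ)) :=
    fun d γ => (cd_mderiv (cd_lap d.hΘ) γ).continuous
  have hcg : ∀ (d : Dat s r) γ i, Continuous (mderiv γ (pd i d.Θ)) :=
    fun d γ i => (cd_mderiv (cd_pd d.hΘ i) γ).continuous
  have hca : ∀ (d : Dat s r) γ, Continuous (mderiv γ d.a) :=
    fun d γ => (cd_mderiv (d.ha hr) γ).continuous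
  have lapL2 : ∀ (d : Dat s r) γ, ord γ + 1 ≤ s → L2 (mderiv γ (lap d.Θ)) ≤ 3 * d.G := by
    intro d γ hγ
    rw [lap_eq d.hΘ]
    have hb : ∀ i, L2 (mderiv (γ + eI i) (pd i d.Θ)) ≤ d.G := fun i =>
      d.bΘ _ i (by rw [ord_add, ord_eI]; exact hγ)
    have h1 := L2_add ((hcg d (γ + eI 0) 0).add (hcg d (γ + eI 1) 1)) (hcg d (γ + eI 2) 2)
    have h2 := L2_add (hcg d (γ + eI 0) 0) (hcg d (γ + eI 1) 1)
    have := hb 0; have := hb 1; have := hb 2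
    refine h1.trans ?_
    change L2 (fun x => mderiv (γ + eI 0) (pd 0 d.Θ) x + mderiv (γ + eI 1) (pd 1 d.Θ) x) + _ ≤ _
    linarith
  have lapsup : ∀ (d : Dat s r) γ, ord γ + 3 ≤ s → ∀ x ∈ Q3,
      |mderiv γ (lap d.Θ) x| ≤ C0 * (3 * d.G) := by
    intro d γ hγ
    apply hsob _ _ (cd_mderiv (cd_lap d.hΘ) γ) (by linarith [d.hG])
    intro δ hδ
    rw [mderiv_mderiv (cd_lap d.hΘ)]
    apply lapL2
    rw [ord_add]; omega
  have hT : ∀ (d : Dat s r) (p : (Fin 3 → ℕ) × (Fin 3 → ℕ)),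
      Continuous fun x => mderiv p.1 d.a x * mderiv p.2 (lap d.Θ) x :=
    fun d p => (hca d p.1).mul (hcl d p.2)
  have := list_L2 (D := Dat s r) L (fun d p x => mderiv p.1 d.a x * mderiv p.2 (lap d.Θ) x) hT
    (fun d => d.R ^ s * d.G) ?_
  · obtain ⟨C, hC, hb⟩ := this
    refine ⟨C, hC, fun d => ?_⟩
    have e : (fun x => mderiv α (fun y => d.a y * lap d.Θ y) x - d.a x * mderiv α (lap d.Θ) x)
        = fun x => (L.map fun p => mderiv p.1 d.a x * mderiv p.2 (lap d.Θ) x).sum := by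
      funext x
      rw [h d.a (lap d.Θ) (d.ha hr) (cd_lap d.hΘ) x]; ring
    rw [e]
    exact ⟨list_cont L (fun p x => mderiv p.1 d.a x * mderiv p.2 (lap d.Θ) x) (hT d), hb d⟩
  · intro p hp
    obtain ⟨hp1, hp2⟩ := hL p hp
    have ho : ord p.1 + ord p.2 = ord α := by rw [← ord_add, hp1]
    have hpos := ord_pos hp2
    by_cases hc : ord p.1 + 2 ≤ s
    · obtain ⟨C2, hC2, hb⟩ := asup s r hs hr p.1 hc
      refine ⟨C2 * 3, by positivity, fun d => ?_⟩
      have hR := d.R_nonneg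
      have hG := d.hG
      refine (L2_mono (hT d p) (hcl d p.2) (c := C2 * d.R ^ ord p.1) (by positivity) ?_).trans ?_
      · intro x _
        rw [abs_mul]
        gcongr
        exact hb d x
      · calc _ ≤ (C2 * d.R ^ s) * (3 * d.G) := by
              gcongr
              · exact L2_nonneg _
              · exact d.R_one
              · omega
              · exact lapL2 d _ (by omega)
          _ = _ := by ring
    · obtain ⟨C2, hC2, hb⟩ := aL2 s r hs hr p.1 (by omega)
      refine ⟨C0 * 3 * C2, by positivity, fun d => ?_⟩
      have hR := d.R_nonneg
      have hG := d.hG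
      refine (L2_mono (hT d p) (hca d p.1) (c := C0 * (3 * d.G)) (by positivity) ?_).trans ?_
      · intro x hx
        rw [abs_mul, mul_comm]
        gcongr
        exact lapsup d _ (by omega) x hx
      · calc _ ≤ (C0 * (3 * d.G)) * (C2 * d.R ^ s) := by
              gcongr
              refine (hb d).trans ?_
              gcongr
              · exact d.R_one
              · omega
          _ = _ := by ring

lemma L2_le_Hs {s : ℕ} (f : SF) {β : Fin 3 → ℕ} (hβ : ord β ≤ s) : L2 (mderiv β f) ≤ HsNorm s f := by
  unfold HsNorm
  rw [← Real.sqrt_eq_rpow]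
  apply Real.le_sqrt_of_sq_le
  apply Finset.single_le_sum (f := fun β => L2 (mderiv β f) ^ 2) (fun i _ => sq_nonneg _)
  unfold midx
  rw [Finset.mem_filter, Fintype.mem_piFinset]
  refine ⟨fun i => ?_, hβ⟩
  have : β i ≤ ord β := Finset.single_le_sum (f := β) (fun _ _ => Nat.zero_le _) (Finset.mem_univ i)
  rw [Finset.mem_range]; omega

lemma Hs_nonneg (s : ℕ) (f : SF) : 0 ≤ HsNorm s f := by
  unfold HsNorm; rw [← Real.sqrt_eq_rpow]; exact Real.sqrt_nonneg _

lemma HsV_nonneg (s : ℕ) (v : VF) : 0 ≤ HsNormV s v := by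
  unfold HsNormV; rw [← Real.sqrt_eq_rpow]; exact Real.sqrt_nonneg _

lemma Hs_le_HsV (s : ℕ) (v : VF) (i : Fin 3) : HsNorm s (v i) ≤ HsNormV s v := by
  unfold HsNormV
  rw [← Real.sqrt_eq_rpow]
  apply Real.le_sqrt_of_sq_le
  exact Finset.single_le_sum (f := fun i => HsNorm s (v i) ^ 2) (fun i _ => sq_nonneg _)
    (Finset.mem_univ i)


/-- commutator estimate for the heat-diffusion term.
Let `s > 7/2` be an integer and `|α| ≤ s`. Suppose `ρ⁰ ∈ H^{s+1}(𝕋³)` with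
`‖ρ⁰‖_{H^{s+1}} ≤ K` and `ρ⁰ ≥ ρ̂ > 0`; let `N ∈ H^s` with `N + ρ⁰ ≥ ρ̂/2` and
`Θ ∈ H^{s+1}` (here: smooth periodic). Then for every `η > 0` there is
`C_η = C(η,s,K,ρ̂)` with
`|⟨∂^α((1/(N+ρ⁰))ΔΘ) − (1/(N+ρ⁰))∂^αΔΘ, ∂^αΘ⟩_{L²}|
  ≤ η‖∇Θ‖²_{H^s} + C_η(‖(N,Θ)‖^s_{H^s}+1)(‖∂^αΘ‖²_{L²}+‖∂^αN‖²_{L²})`. -/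
theorem commutator_diffusion (s : ℕ) (hs : 7/2 < (s:ℝ)) (α : Fin 3 → ℕ)
    (hα : (∑ i, α i) ≤ s) (K ρhat : ℝ) (hρhat : 0 < ρhat) :
    ∀ η > (0:ℝ), ∃ C > (0:ℝ),
      ∀ ρ0 : SF, SmoothS ρ0 → PerS ρ0 → HsNorm (s+1) ρ0 ≤ K → (∀ x, ρhat ≤ ρ0 x) →
      ∀ (N Θ : SF), SmoothS N → PerS N → SmoothS Θ → PerS Θ →
        (∀ x, ρhat / 2 ≤ N x + ρ0 x) →
        |ip (fun x => mderiv α (fun y => 1 / (N y + ρ0 y) * lap Θ y) x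
              - 1 / (N x + ρ0 x) * mderiv α (lap Θ) x) (mderiv α Θ)|
          ≤ η * (HsNormV s (grad Θ)) ^ 2
            + C * ((HsNorm s N + HsNorm s Θ) ^ s + 1)
                * ((L2 (mderiv α Θ)) ^ 2 + (L2 (mderiv α N)) ^ 2) := by
  have hs4 : 4 ≤ s := by
    by_contra h
    have h3 : s ≤ 3 := by omega
    have : (s:ℝ) ≤ 3 := by exact_mod_cast h3
    linarith
  have hr : 0 < ρhat / 2 := by positivity
  intro η hη
  obtain ⟨C, hC, hmain⟩ := comm_L2 s (ρhat / 2) hs4 hr α hα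
  have hK : 0 ≤ |K| := abs_nonneg K
  refine ⟨C ^ 2 / (4 * η) * ((1 + |K|) ^ s * 2 ^ s) + 1, by positivity, ?_⟩
  intro ρ0 hρ pρ hρK hρl N Θ hN pN hΘ pΘ hlow
  have hN0 := Hs_nonneg s N
  have hΘ0 := Hs_nonneg s Θ
  let d : Dat s (ρhat / 2) :=
    { u := fun x => N x + ρ0 x
      Θ := Θ
      M := 1 + |K| + HsNorm s N
      G := HsNormV s (grad Θ)
      hu := hN.add hρ
      pu := fun x i => by
        show N _ + ρ0 _ = N x + ρ0 x
        rw [pN x i, pρ x i]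
      hΘ := hΘ
      hM := by linarith
      hG := HsV_nonneg _ _
      lb := hlow
      bu := by
        intro β hβ
        rw [mderiv_add hN hρ]
        have h1 := L2_add (cd_mderiv hN β).continuous (cd_mderiv hρ β).continuous
        have h2 := L2_le_Hs N hβ
        have h3 := L2_le_Hs (s := s + 1) ρ0 (show ord β ≤ s + 1 by omega)
        have h4 := le_abs_self K
        linarith
      bΘ := fun β i hβ => (L2_le_Hs (pd i Θ) hβ).trans (Hs_le_HsV s (grad Θ) i) }
  obtain ⟨hcont, hb⟩ := hmain d
  have h1 := ip_le hcont (cd_mderiv hΘ α).continuous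
  refine le_trans h1 ?_
  have hR : (d.R ^ s) ^ 2 = (1 + |K| + HsNorm s N) ^ s := by
    rw [← pow_mul, mul_comm, pow_mul, d.R_sq]
  set G := HsNormV s (grad Θ) with hG
  have hGd : d.G = G := rfl
  set A := L2 (mderiv α Θ) with hA
  have hA0 : 0 ≤ A := L2_nonneg _
  have hdR := d.R_nonneg
  set X := HsNorm s N + HsNorm s Θ with hX
  have hX0 : 0 ≤ X := add_nonneg hN0 hΘ0
  have hMX : (1 + |K| + HsNorm s N) ^ s ≤ (1 + |K|) ^ s * 2 ^ s * (X ^ s + 1) := by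
    calc (1 + |K| + HsNorm s N) ^ s ≤ ((1 + |K|) * (1 + X)) ^ s := by
          apply pow_le_pow_left₀ (by positivity)
          nlinarith
      _ = (1 + |K|) ^ s * (1 + X) ^ s := mul_pow _ _ _
      _ ≤ (1 + |K|) ^ s * (2 ^ s * (X ^ s + 1)) := by
          gcongr
          rcases le_total X 1 with h | h
          · calc (1 + X) ^ s ≤ 2 ^ s := pow_le_pow_left₀ (by positivity) (by linarith) _
              _ ≤ 2 ^ s * (X ^ s + 1) := le_mul_of_one_le_right (by positivity)
                  (by linarith [pow_nonneg hX0 s])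
          · calc (1 + X) ^ s ≤ (2 * X) ^ s := pow_le_pow_left₀ (by positivity) (by linarith) _
              _ = 2 ^ s * X ^ s := mul_pow _ _ _
              _ ≤ 2 ^ s * (X ^ s + 1) := by gcongr; linarith
      _ = _ := by ring
  have hXs : 0 ≤ X ^ s := pow_nonneg hX0 s
  have young : C * (d.R ^ s * G) * A ≤ η * G ^ 2 + C ^ 2 / (4 * η) * (d.R ^ s) ^ 2 * A ^ 2 := by
    have h := sq_nonneg (2 * η * G - C * d.R ^ s * A)
    have e : η * G ^ 2 + C ^ 2 / (4 * η) * (d.R ^ s) ^ 2 * A ^ 2 - C * (d.R ^ s * G) * A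
        = (2 * η * G - C * d.R ^ s * A) ^ 2 / (4 * η) := by field_simp; ring
    have : 0 ≤ (2 * η * G - C * d.R ^ s * A) ^ 2 / (4 * η) := by positivity
    linarith
  calc _ ≤ C * (d.R ^ s * G) * A := mul_le_mul_of_nonneg_right hb hA0
    _ ≤ _ := young
    _ ≤ η * G ^ 2 + C ^ 2 / (4 * η) * ((1 + |K|) ^ s * 2 ^ s * (X ^ s + 1)) * A ^ 2 := by
        rw [hR]; gcongr
    _ ≤ _ := by
        have e1 : 0 ≤ (X ^ s + 1) * A ^ 2 := by positivity
        have e2 : 0 ≤ (C ^ 2 / (4 * η) * ((1 + |K|) ^ s * 2 ^ s) + 1) * (X ^ s + 1)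
          * L2 (mderiv α N) ^ 2 := by positivity
        nlinarith
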